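/- If a measure ξ is universally optimal, then q*_ξ = y*, x* = −c_{ξ01}/c_{ξ11}, and the support {s ∈ S : p_s > 0} of ξ is contained in Q. -/

import Mathlib

open Matrix

namespace TwoDim

/-- The set of plots of an `a × b` block. -/
abbrev Plot (a b : ℕ) := Fin a × Fin b

/-- A block array: an assignment of one of `t` treatments to each plot. -/
abbrev BlockArray (a b t : ℕ) := Plot a b → Fin t

/-- The all-ones matrix. -/
def Jmat (n : Type*) : Matrix n n ℝ := Matrix.of fun _ _ => 1

/-- `B_m = I - J/m`. -/
noncomputable def Bmat (n : Type*) [Fintype n] [DecidableEq n] : Matrix n n ℝ :=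
  1 - ((Fintype.card n : ℝ))⁻¹ • Jmat n

variable {a b t : ℕ}

/-- The treatment incidence matrix `T_s`. -/
def Tmat (s : BlockArray a b t) : Matrix (Plot a b) (Fin t) ℝ :=
  Matrix.of fun q k => if s q = k then 1 else 0

/-- Two plots are neighbors if they agree in one coordinate and differ by 1 in the other. -/
def Neighbor (q r : Plot a b) : Prop :=
  (q.1 = r.1 ∧ (q.2.val + 1 = r.2.val ∨ r.2.val + 1 = q.2.val)) ∨
  (q.2 = r.2 ∧ (q.1.val + 1 = r.1.val ∨ r.1.val + 1 = q.1.val))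

instance (q r : Plot a b) : Decidable (Neighbor q r) := by
  unfold Neighbor; infer_instance

/-- The adjacency matrix of the neighbor relation. -/
def Mmat (a b : ℕ) : Matrix (Plot a b) (Plot a b) ℝ :=
  Matrix.of fun q r => if Neighbor q r then 1 else 0

/-- `F_s = M T_s`. -/
def Fmat (s : BlockArray a b t) : Matrix (Plot a b) (Fin t) ℝ :=
  Mmat a b * Tmat s

/-- `B̃ = Σ⁻¹ − Σ⁻¹ J Σ⁻¹ / (1'Σ⁻¹1)`. -/
noncomputable def Btilde (Sig : Matrix (Plot a b) (Plot a b) ℝ) :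
    Matrix (Plot a b) (Plot a b) ℝ :=
  Sig⁻¹ - (∑ i, ∑ j, Sig⁻¹ i j)⁻¹ • (Sig⁻¹ * Jmat (Plot a b) * Sig⁻¹)

/-- `C_{s00} = T_s' W T_s` (with `W` playing the role of `B̃`). -/
def Cs00 (W : Matrix (Plot a b) (Plot a b) ℝ) (s : BlockArray a b t) :
    Matrix (Fin t) (Fin t) ℝ := (Tmat s)ᵀ * W * Tmat s

/-- `C_{s01} = T_s' W F_s`. -/
def Cs01 (W : Matrix (Plot a b) (Plot a b) ℝ) (s : BlockArray a b t) :
    Matrix (Fin t) (Fin t) ℝ := (Tmat s)ᵀ * W * Fmat s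

/-- `C_{s11} = F_s' W F_s`. -/
def Cs11 (W : Matrix (Plot a b) (Plot a b) ℝ) (s : BlockArray a b t) :
    Matrix (Fin t) (Fin t) ℝ := (Fmat s)ᵀ * W * Fmat s

/-- `c_{s00} = tr(B_t C_{s00})`. -/
noncomputable def cs00 (W : Matrix (Plot a b) (Plot a b) ℝ) (s : BlockArray a b t) : ℝ :=
  Matrix.trace (Bmat (Fin t) * Cs00 W s)

noncomputable def cs01 (W : Matrix (Plot a b) (Plot a b) ℝ) (s : BlockArray a b t) : ℝ :=
  Matrix.trace (Bmat (Fin t) * Cs01 W s)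

noncomputable def cs11 (W : Matrix (Plot a b) (Plot a b) ℝ) (s : BlockArray a b t) : ℝ :=
  Matrix.trace (Bmat (Fin t) * Cs11 W s)

/-- The quadratic `q_s(x) = c_{s00} + 2 c_{s01} x + c_{s11} x²`. -/
noncomputable def qpoly (W : Matrix (Plot a b) (Plot a b) ℝ) (s : BlockArray a b t) (x : ℝ) : ℝ :=
  cs00 W s + 2 * cs01 W s * x + cs11 W s * x ^ 2

/-- A measure on the set of block arrays: nonnegative weights summing to one. -/
def IsMeasure (ξ : BlockArray a b t → ℝ) : Prop :=
  (∀ s, 0 ≤ ξ s) ∧ ∑ s, ξ s = 1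

noncomputable def Cm00 (W : Matrix (Plot a b) (Plot a b) ℝ) (ξ : BlockArray a b t → ℝ) :
    Matrix (Fin t) (Fin t) ℝ := ∑ s, ξ s • Cs00 W s

noncomputable def Cm01 (W : Matrix (Plot a b) (Plot a b) ℝ) (ξ : BlockArray a b t → ℝ) :
    Matrix (Fin t) (Fin t) ℝ := ∑ s, ξ s • Cs01 W s

noncomputable def Cm11 (W : Matrix (Plot a b) (Plot a b) ℝ) (ξ : BlockArray a b t → ℝ) :
    Matrix (Fin t) (Fin t) ℝ := ∑ s, ξ s • Cs11 W s

noncomputable def cm00 (W : Matrix (Plot a b) (Plot a b) ℝ) (ξ : BlockArray a b t → ℝ) : ℝ :=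
  ∑ s, ξ s * cs00 W s

noncomputable def cm01 (W : Matrix (Plot a b) (Plot a b) ℝ) (ξ : BlockArray a b t → ℝ) : ℝ :=
  ∑ s, ξ s * cs01 W s

noncomputable def cm11 (W : Matrix (Plot a b) (Plot a b) ℝ) (ξ : BlockArray a b t → ℝ) : ℝ :=
  ∑ s, ξ s * cs11 W s

/-- `q*_ξ = c_{ξ00} − c_{ξ01}²/c_{ξ11}`. -/
noncomputable def qstar (W : Matrix (Plot a b) (Plot a b) ℝ) (ξ : BlockArray a b t → ℝ) : ℝ :=
  cm00 W ξ - (cm01 W ξ) ^ 2 / cm11 W ξ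

/-- `G` is a generalized inverse of `A`. -/
def IsGenInv (A G : Matrix (Fin t) (Fin t) ℝ) : Prop := A * G * A = A

/-- Information matrix `C_{ξ00} − C_{ξ01} G C_{ξ10}` computed with a generalized inverse `G`. -/
noncomputable def InfoMat (W : Matrix (Plot a b) (Plot a b) ℝ) (ξ : BlockArray a b t → ℝ)
    (G : Matrix (Fin t) (Fin t) ℝ) : Matrix (Fin t) (Fin t) ℝ :=
  Cm00 W ξ - Cm01 W ξ * G * (Cm01 W ξ)ᵀ

/-- A criterion `Φ` on `t×t` real symmetric matrices: concave, Loewner-nondecreasing, and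
invariant under simultaneous permutations of rows and columns. -/
def GoodPhi (t : ℕ) (Φ : Matrix (Fin t) (Fin t) ℝ → ℝ) : Prop :=
  (∀ A B : Matrix (Fin t) (Fin t) ℝ, A.IsSymm → B.IsSymm → ∀ α : ℝ, 0 ≤ α → α ≤ 1 →
      α * Φ A + (1 - α) * Φ B ≤ Φ (α • A + (1 - α) • B)) ∧
  (∀ A B : Matrix (Fin t) (Fin t) ℝ, A.IsSymm → B.IsSymm → (B - A).PosSemidef → Φ A ≤ Φ B) ∧
  (∀ (σ : Equiv.Perm (Fin t)) (C : Matrix (Fin t) (Fin t) ℝ), Φ (C.submatrix σ σ) = Φ C)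

/-- Universal optimality of a measure `ξ`. -/
def UnivOptimal (W : Matrix (Plot a b) (Plot a b) ℝ) (ξ : BlockArray a b t → ℝ) : Prop :=
  ∀ η : BlockArray a b t → ℝ, IsMeasure η →
    ∀ G H : Matrix (Fin t) (Fin t) ℝ, IsGenInv (Cm11 W ξ) G → IsGenInv (Cm11 W η) H →
      ∀ Φ : Matrix (Fin t) (Fin t) ℝ → ℝ, GoodPhi t Φ →
        Φ (InfoMat W η H) ≤ Φ (InfoMat W ξ G)

/-- A measure is symmetric if it is invariant under relabeling of the treatments. -/
def IsSymmetricMeasure (ξ : BlockArray a b t → ℝ) : Prop :=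
  ∀ (σ : Equiv.Perm (Fin t)) (s : BlockArray a b t), ξ (fun q => σ (s q)) = ξ s

/-- A matrix is completely symmetric if it is of the form `αI + βJ`. -/
def ComplSym (A : Matrix (Fin t) (Fin t) ℝ) : Prop :=
  ∃ α β : ℝ, A = α • (1 : Matrix (Fin t) (Fin t) ℝ) + β • Jmat (Fin t)

/-- A measure is pseudo symmetric if `C_{ξ00}`, `C_{ξ01}`, `C_{ξ11}` are completely symmetric. -/
def PseudoSym (W : Matrix (Plot a b) (Plot a b) ℝ) (ξ : BlockArray a b t → ℝ) : Prop :=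
  ComplSym (Cm00 W ξ) ∧ ComplSym (Cm01 W ξ) ∧ ComplSym (Cm11 W ξ)

/-- `r(x) = max_{s∈S} q_s(x)`. -/
noncomputable def rfun {a b : ℕ} (t : ℕ) (W : Matrix (Plot a b) (Plot a b) ℝ) (x : ℝ) : ℝ :=
  sSup (Set.range fun s : BlockArray a b t => qpoly W s x)

/-- `min_{s∈S} q_s(x)`. -/
noncomputable def rmin {a b : ℕ} (t : ℕ) (W : Matrix (Plot a b) (Plot a b) ℝ) (x : ℝ) : ℝ :=
  sInf (Set.range fun s : BlockArray a b t => qpoly W s x)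

/-- Number of plots assigned treatment `k` by `s`. -/
noncomputable def f0 (s : BlockArray a b t) (k : Fin t) : ℕ :=
  {q : Plot a b | s q = k}.ncard

/-- Replications of `k` among the columns `1,…,b−1`. -/
noncomputable def f1 (s : BlockArray a b t) (k : Fin t) : ℕ :=
  {q : Plot a b | s q = k ∧ q.2.val + 1 < b}.ncard

/-- Replications of `k` among the columns `2,…,b`. -/
noncomputable def f2 (s : BlockArray a b t) (k : Fin t) : ℕ :=
  {q : Plot a b | s q = k ∧ 1 ≤ q.2.val}.ncard

/-- Replications of `k` among the rows `1,…,a−1`. -/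
noncomputable def f3 (s : BlockArray a b t) (k : Fin t) : ℕ :=
  {q : Plot a b | s q = k ∧ q.1.val + 1 < a}.ncard

/-- Replications of `k` among the rows `2,…,a`. -/
noncomputable def f4 (s : BlockArray a b t) (k : Fin t) : ℕ :=
  {q : Plot a b | s q = k ∧ 1 ≤ q.1.val}.ncard

noncomputable def fc (s : BlockArray a b t) : ℕ → Fin t → ℕ
  | 0 => f0 s
  | 1 => f1 s
  | 2 => f2 s
  | 3 => f3 s
  | 4 => f4 s
  | _ => fun _ => 0

/-- `h^{uv}_s = Σ_k f^u_{s,k} f^v_{s,k}`. -/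
noncomputable def hval (s : BlockArray a b t) (u v : ℕ) : ℝ :=
  ∑ k : Fin t, (fc s u k : ℝ) * (fc s v k : ℝ)

noncomputable def h00 (s : BlockArray a b t) : ℝ := hval s 0 0

noncomputable def h1 (s : BlockArray a b t) : ℝ :=
  hval s 0 1 + hval s 0 2 + hval s 0 3 + hval s 0 4

noncomputable def h2 (s : BlockArray a b t) : ℝ :=
  hval s 1 1 + hval s 2 2 + hval s 3 3 + hval s 4 4

noncomputable def h3 (s : BlockArray a b t) : ℝ :=
  hval s 1 2 + hval s 1 3 + hval s 1 4 + hval s 2 3 + hval s 2 4 + hval s 3 4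

/-- `z¹_{s,r}`: horizontally adjacent pairs of plots receiving the same treatment. -/
noncomputable def zr1 (s : BlockArray a b t) : ℕ :=
  {qr : Plot a b × Plot a b |
    qr.1.1 = qr.2.1 ∧ qr.1.2.val + 1 = qr.2.2.val ∧ s qr.1 = s qr.2}.ncard

noncomputable def zr2 (s : BlockArray a b t) : ℕ :=
  {qr : Plot a b × Plot a b |
    qr.1.1 = qr.2.1 ∧ qr.1.2.val + 2 = qr.2.2.val ∧ s qr.1 = s qr.2}.ncard

noncomputable def zc1 (s : BlockArray a b t) : ℕ :=
  {qr : Plot a b × Plot a b |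
    qr.1.2 = qr.2.2 ∧ qr.1.1.val + 1 = qr.2.1.val ∧ s qr.1 = s qr.2}.ncard

noncomputable def zc2 (s : BlockArray a b t) : ℕ :=
  {qr : Plot a b × Plot a b |
    qr.1.2 = qr.2.2 ∧ qr.1.1.val + 2 = qr.2.1.val ∧ s qr.1 = s qr.2}.ncard

/-- pairs `(i,j)`, `(i−1,j+1)` with the same treatment. -/
noncomputable def zd1 (s : BlockArray a b t) : ℕ :=
  {qr : Plot a b × Plot a b |
    qr.2.1.val + 1 = qr.1.1.val ∧ qr.1.2.val + 1 = qr.2.2.val ∧ s qr.1 = s qr.2}.ncard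

/-- pairs `(i,j)`, `(i+1,j+1)` with the same treatment. -/
noncomputable def zd2 (s : BlockArray a b t) : ℕ :=
  {qr : Plot a b × Plot a b |
    qr.1.1.val + 1 = qr.2.1.val ∧ qr.1.2.val + 1 = qr.2.2.val ∧ s qr.1 = s qr.2}.ncard

noncomputable def z1 (s : BlockArray a b t) : ℝ := 2 * zr1 s + 2 * zc1 s

noncomputable def z2 (s : BlockArray a b t) : ℝ :=
  2 * zr2 s + 2 * zc2 s + 4 * zd1 s + 4 * zd2 s

/-- `η = 4p − 2a − 2b − 2(8ab − 7a − 7b + 4)/t + 4(2p − a − b)²/(pt)` where `p = ab`. -/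
noncomputable def eta (a b t : ℕ) : ℝ :=
  4 * ((a : ℝ) * b) - 2 * a - 2 * b - 2 * (8 * (a : ℝ) * b - 7 * a - 7 * b + 4) / t +
    4 * (2 * (a : ℝ) * b - a - b) ^ 2 / (((a : ℝ) * b) * t)

/-- A corner plot of the `a × b` block. -/
def IsCorner (q : Plot a b) : Prop :=
  (q.1.val = 0 ∨ q.1.val + 1 = a) ∧ (q.2.val = 0 ∨ q.2.val + 1 = b)

/-- Treatment `k` is significant in `s`: it occupies exactly two plots, which are
neighbors, at least one of them being a corner plot. -/
def Significant (s : BlockArray a b t) (k : Fin t) : Prop :=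
  ∃ u v : Plot a b, u ≠ v ∧ {q : Plot a b | s q = k} = {u, v} ∧
    Neighbor u v ∧ (IsCorner u ∨ IsCorner v)

/-- Treatment `k` is strictly significant in `s`: both of its two plots are corners. -/
def StrictSignificant (s : BlockArray a b t) (k : Fin t) : Prop :=
  ∃ u v : Plot a b, u ≠ v ∧ {q : Plot a b | s q = k} = {u, v} ∧
    Neighbor u v ∧ IsCorner u ∧ IsCorner v

/-- `Q_i`: block arrays with exactly `i` significant treatments in which every other
treatment appears at most once. -/
def Qset (a b t : ℕ) (i : ℕ) : Set (BlockArray a b t) :=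
  {s | {k : Fin t | Significant s k}.ncard = i ∧
       ∀ k : Fin t, ¬ Significant s k → f0 s k ≤ 1}

/-- `Q_j*`: members of `Q_j` whose significant treatments are all strictly significant. -/
def QsetStar (a b t : ℕ) (j : ℕ) : Set (BlockArray a b t) :=
  {s | s ∈ Qset a b t j ∧ ∀ k : Fin t, Significant s k → StrictSignificant s k}

/-- Treatment `k` is connected in `s`. -/
def ConnectedIn (s : BlockArray a b t) (k : Fin t) : Prop :=
  ∀ q r : Plot a b, s q = k → s r = k →
    Relation.ReflTransGen (fun u v => Neighbor u v ∧ s u = k ∧ s v = k) q r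

/-! ### Helper lemmas -/

/-- The linear criterion `tr(B_t C)`. -/
noncomputable def phiB (t : ℕ) (C : Matrix (Fin t) (Fin t) ℝ) : ℝ :=
  Matrix.trace (Bmat (Fin t) * C)

theorem phiB_eq (C : Matrix (Fin t) (Fin t) ℝ) :
    phiB t C = ∑ i, C i i - (t : ℝ)⁻¹ * ∑ i, ∑ j, C i j := by
  unfold phiB Bmat
  rw [Matrix.sub_mul, Matrix.one_mul, Matrix.trace_sub, Matrix.smul_mul, Matrix.trace_smul]
  congr 1
  simp only [Matrix.trace, Matrix.diag, Matrix.mul_apply, Jmat, Matrix.of_apply, one_mul,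
    smul_eq_mul, Fintype.card_fin]
  rw [Finset.sum_comm]

theorem phiB_add (C D : Matrix (Fin t) (Fin t) ℝ) : phiB t (C + D) = phiB t C + phiB t D := by
  simp [phiB, Matrix.mul_add]

theorem phiB_sub (C D : Matrix (Fin t) (Fin t) ℝ) : phiB t (C - D) = phiB t C - phiB t D := by
  simp [phiB, Matrix.mul_sub]

theorem phiB_smul (r : ℝ) (C : Matrix (Fin t) (Fin t) ℝ) : phiB t (r • C) = r * phiB t C := by
  simp [phiB]

theorem phiB_transpose (C : Matrix (Fin t) (Fin t) ℝ) : phiB t Cᵀ = phiB t C := by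
  rw [phiB_eq, phiB_eq]
  simp only [Matrix.transpose_apply]
  rw [Finset.sum_comm]

theorem phiB_sum {ι : Type*} (S : Finset ι) (f : ι → Matrix (Fin t) (Fin t) ℝ) :
    phiB t (∑ i ∈ S, f i) = ∑ i ∈ S, phiB t (f i) := by
  simp [phiB, Matrix.mul_sum, Matrix.trace_sum]

theorem phiB_submatrix (σ : Equiv.Perm (Fin t)) (C : Matrix (Fin t) (Fin t) ℝ) :
    phiB t (C.submatrix σ σ) = phiB t C := by
  rw [phiB_eq, phiB_eq]
  simp only [Matrix.submatrix_apply]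
  rw [Equiv.sum_comp σ (fun i => C i i), Equiv.sum_comp σ (fun i => ∑ j, C i (σ j))]
  congr 2
  exact Finset.sum_congr rfl fun i _ => Equiv.sum_comp σ (fun j => C i j)

theorem Bmat_transpose : (Bmat (Fin t))ᵀ = Bmat (Fin t) := by
  ext i j
  simp [Bmat, Jmat, Matrix.one_apply, eq_comm]

theorem Jmat_mul_Jmat : Jmat (Fin t) * Jmat (Fin t) = (t : ℝ) • Jmat (Fin t) := by
  ext i j
  simp [Jmat, Matrix.mul_apply]

theorem Jmat_mul_Bmat (ht : 2 ≤ t) : Jmat (Fin t) * Bmat (Fin t) = 0 := by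
  have : (t : ℝ) ≠ 0 := by positivity
  rw [Bmat, Matrix.mul_sub, Matrix.mul_smul, Jmat_mul_Jmat]
  simp [smul_smul, this]

theorem Bmat_mul_Jmat (ht : 2 ≤ t) : Bmat (Fin t) * Jmat (Fin t) = 0 := by
  have : (t : ℝ) ≠ 0 := by positivity
  rw [Bmat, Matrix.sub_mul, Matrix.smul_mul, Jmat_mul_Jmat]
  simp [smul_smul, this]

theorem Bmat_mul_Bmat (ht : 2 ≤ t) : Bmat (Fin t) * Bmat (Fin t) = Bmat (Fin t) := by
  nth_rewrite 1 [Bmat]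
  rw [Matrix.sub_mul, Matrix.smul_mul, Jmat_mul_Bmat ht]
  simp

theorem Bmat_trace (ht : 2 ≤ t) : (Bmat (Fin t)).trace = (t : ℝ) - 1 := by
  have : (t : ℝ) ≠ 0 := by positivity
  simp [Bmat, Matrix.trace, Jmat, this]

theorem phiB_conj (ht : 2 ≤ t) (C : Matrix (Fin t) (Fin t) ℝ) :
    phiB t C = (Bmat (Fin t) * C * (Bmat (Fin t))).trace := by
  rw [Matrix.trace_mul_comm, ← Matrix.mul_assoc, Bmat_mul_Bmat ht]
  rfl

theorem phiB_nonneg (ht : 2 ≤ t) {C : Matrix (Fin t) (Fin t) ℝ} (hC : C.PosSemidef) :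
    0 ≤ phiB t C := by
  rw [phiB_conj ht]
  have := (hC.mul_mul_conjTranspose_same (Bmat (Fin t))).trace_nonneg
  rwa [Matrix.conjTranspose_eq_transpose_of_trivial, Bmat_transpose] at this

theorem phiB_good (ht : 2 ≤ t) : GoodPhi t (phiB t) := by
  refine ⟨fun A B _ _ α _ _ => ?_, fun A B _ _ h => ?_, phiB_submatrix⟩
  · rw [phiB_add, phiB_smul, phiB_smul]
  · have := phiB_nonneg ht h
    rw [phiB_sub] at this
    linarith

theorem exists_genInv (A : Matrix (Fin t) (Fin t) ℝ) : ∃ G, IsGenInv A G := by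
  let f := Matrix.toLin' A
  obtain ⟨g, hg⟩ := LinearMap.exists_rightInverse_of_surjective f.rangeRestrict
    f.range_rangeRestrict
  obtain ⟨h, hh⟩ := LinearMap.exists_extend g
  refine ⟨LinearMap.toMatrix' h, ?_⟩
  unfold IsGenInv
  apply Matrix.toLin'.injective
  rw [Matrix.toLin'_mul, Matrix.toLin'_mul, Matrix.toLin'_toMatrix']
  refine LinearMap.ext fun v => ?_
  change f (h (f v)) = f v
  have h1 : h (f v) = g (f.rangeRestrict v) := by
    rw [← hh]; rfl
  rw [h1]
  have := congrArg (fun k => (k (f.rangeRestrict v) : Fin t → ℝ)) hg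
  simpa using this

/-! ### The matrix `B̃` -/

theorem one_dot_mulVec_one {n : Type*} [Fintype n] (P : Matrix n n ℝ) :
    (1 : n → ℝ) ⬝ᵥ P *ᵥ 1 = ∑ i, ∑ j, P i j := by
  simp [dotProduct, Matrix.mulVec]

theorem Jmat_mulVec {n : Type*} [Fintype n] (v : n → ℝ) :
    Jmat n *ᵥ v = ((1 : n → ℝ) ⬝ᵥ v) • (1 : n → ℝ) := by
  ext i
  simp [Jmat, Matrix.mulVec, dotProduct]

theorem Btilde_mulVec (Sig : Matrix (Plot a b) (Plot a b) ℝ) (v : Plot a b → ℝ) :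
    Btilde Sig *ᵥ v = Sig⁻¹ *ᵥ v -
      ((∑ i, ∑ j, Sig⁻¹ i j)⁻¹ * ((1 : Plot a b → ℝ) ⬝ᵥ Sig⁻¹ *ᵥ v)) • (Sig⁻¹ *ᵥ 1) := by
  rw [Btilde, Matrix.sub_mulVec, Matrix.smul_mulVec, ← Matrix.mulVec_mulVec,
    ← Matrix.mulVec_mulVec, Jmat_mulVec, Matrix.mulVec_smul, smul_smul]

theorem dot_symm {n : Type*} [Fintype n] {P : Matrix n n ℝ} (hP : P.IsSymm) (u v : n → ℝ) :
    u ⬝ᵥ P *ᵥ v = v ⬝ᵥ P *ᵥ u := by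
  rw [Matrix.dotProduct_mulVec, ← Matrix.mulVec_transpose, hP.eq, dotProduct_comm]

theorem Btilde_quad [Nonempty (Plot a b)] {Sig : Matrix (Plot a b) (Plot a b) ℝ}
    (hSig : Sig.PosDef) (v : Plot a b → ℝ) :
    ∃ c : ℝ, v ⬝ᵥ Btilde Sig *ᵥ v = (v - c • 1) ⬝ᵥ Sig⁻¹ *ᵥ (v - c • 1) := by
  have hP := hSig.inv
  have hs : (Sig⁻¹).IsSymm := by
    have := hP.isHermitian.eq
    rwa [Matrix.conjTranspose_eq_transpose_of_trivial] at this
  have h1 : 0 < ∑ i, ∑ j, Sig⁻¹ i j := by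
    have := hP.dotProduct_mulVec_pos (x := 1) one_ne_zero
    rwa [star_trivial, one_dot_mulVec_one] at this
  refine ⟨(∑ i, ∑ j, Sig⁻¹ i j)⁻¹ * ((1 : Plot a b → ℝ) ⬝ᵥ Sig⁻¹ *ᵥ v), ?_⟩
  rw [Btilde_mulVec]
  simp only [Matrix.mulVec_sub, Matrix.mulVec_smul, dotProduct_sub, sub_dotProduct,
    smul_dotProduct, dotProduct_smul, one_dot_mulVec_one, smul_eq_mul]
  rw [dot_symm hs v 1]
  field_simp
  ring

theorem Btilde_symm {Sig : Matrix (Plot a b) (Plot a b) ℝ}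
    (hSig : Sig.PosDef) : (Btilde Sig).IsSymm := by
  have hP := hSig.inv
  have hs : (Sig⁻¹)ᵀ = Sig⁻¹ := by
    have := hP.isHermitian.eq
    rwa [Matrix.conjTranspose_eq_transpose_of_trivial] at this
  have hJ : (Jmat (Plot a b))ᵀ = Jmat (Plot a b) := by ext i j; simp [Jmat]
  unfold Matrix.IsSymm Btilde
  rw [Matrix.transpose_sub, Matrix.transpose_smul, Matrix.transpose_mul, Matrix.transpose_mul,
    hs, hJ, Matrix.mul_assoc]

theorem Btilde_psd [Nonempty (Plot a b)] {Sig : Matrix (Plot a b) (Plot a b) ℝ}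
    (hSig : Sig.PosDef) : (Btilde Sig).PosSemidef := by
  refine Matrix.PosSemidef.of_dotProduct_mulVec_nonneg ?_ fun v => ?_
  · rw [Matrix.IsHermitian, Matrix.conjTranspose_eq_transpose_of_trivial]
    exact Btilde_symm hSig
  · obtain ⟨c, hc⟩ := Btilde_quad hSig v
    rw [star_trivial, hc]
    simpa using hSig.inv.posSemidef.dotProduct_mulVec_nonneg (v - c • 1)

theorem Btilde_quad_zero [Nonempty (Plot a b)] {Sig : Matrix (Plot a b) (Plot a b) ℝ}
    (hSig : Sig.PosDef) (v : Plot a b → ℝ) (h : v ⬝ᵥ Btilde Sig *ᵥ v = 0) (q r : Plot a b) :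
    v q = v r := by
  obtain ⟨c, hc⟩ := Btilde_quad hSig v
  have h0 : v - c • 1 = 0 := by
    by_contra hne
    have := hSig.inv.dotProduct_mulVec_pos hne
    rw [star_trivial, ← hc, h] at this
    exact lt_irrefl _ this
  have hq := congrFun h0 q
  have hr := congrFun h0 r
  simp at hq hr
  linarith

theorem Btilde_one [Nonempty (Plot a b)] {Sig : Matrix (Plot a b) (Plot a b) ℝ}
    (hSig : Sig.PosDef) : Btilde Sig *ᵥ 1 = 0 := by
  have h1 : 0 < ∑ i, ∑ j, Sig⁻¹ i j := by
    have := hSig.inv.dotProduct_mulVec_pos (x := 1) one_ne_zero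
    rwa [star_trivial, one_dot_mulVec_one] at this
  rw [Btilde_mulVec, one_dot_mulVec_one, inv_mul_cancel₀ h1.ne']
  simp

/-! ### Information bound -/

theorem Cs_symm00 {W : Matrix (Plot a b) (Plot a b) ℝ} (hW : W.IsSymm) (s : BlockArray a b t) :
    (Cs11 W s).IsSymm := by
  unfold Matrix.IsSymm Cs11
  rw [Matrix.transpose_mul, Matrix.transpose_mul, Matrix.transpose_transpose, hW.eq,
    Matrix.mul_assoc]

theorem Cs11_psd {W : Matrix (Plot a b) (Plot a b) ℝ} (hW : W.PosSemidef)
    (s : BlockArray a b t) : (Cs11 W s).PosSemidef := by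
  have := hW.conjTranspose_mul_mul_same (Fmat s)
  rwa [Matrix.conjTranspose_eq_transpose_of_trivial] at this

theorem Cm11_psd {W : Matrix (Plot a b) (Plot a b) ℝ} (hW : W.PosSemidef)
    {ξ : BlockArray a b t → ℝ} (hξ : IsMeasure ξ) : (Cm11 W ξ).PosSemidef :=
  Matrix.posSemidef_sum _ fun s _ => (Cs11_psd hW s).smul (hξ.1 s)

theorem ker_cond {W : Matrix (Plot a b) (Plot a b) ℝ} (hW : W.PosSemidef)
    {ξ : BlockArray a b t → ℝ} (hξ : IsMeasure ξ) (v : Fin t → ℝ) (hv : Cm11 W ξ *ᵥ v = 0) :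
    Cm01 W ξ *ᵥ v = 0 := by
  have h0 : ∑ s, ξ s * (v ⬝ᵥ Cs11 W s *ᵥ v) = 0 := by
    have : v ⬝ᵥ Cm11 W ξ *ᵥ v = 0 := by rw [hv]; simp
    rw [Cm11, Matrix.sum_mulVec, dotProduct_sum] at this
    simpa [Matrix.smul_mulVec] using this
  have hnn : ∀ s, 0 ≤ v ⬝ᵥ Cs11 W s *ᵥ v := fun s => by
    simpa using (Cs11_psd hW s).dotProduct_mulVec_nonneg v
  rw [Finset.sum_eq_zero_iff_of_nonneg fun s _ => mul_nonneg (hξ.1 s) (hnn s)] at h0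
  rw [Cm01, Matrix.sum_mulVec]
  refine Finset.sum_eq_zero fun s hs => ?_
  rcases mul_eq_zero.1 (h0 s hs) with h | h
  · simp [h]
  · have h2 : star (Fmat s *ᵥ v) ⬝ᵥ W *ᵥ (Fmat s *ᵥ v) = 0 := by
      rw [star_trivial, ← h, Cs11, ← Matrix.mulVec_mulVec, ← Matrix.mulVec_mulVec,
        Matrix.dotProduct_mulVec v, Matrix.vecMul_transpose]
    rw [hW.dotProduct_mulVec_zero_iff] at h2
    rw [Matrix.smul_mulVec, Cs01, ← Matrix.mulVec_mulVec, ← Matrix.mulVec_mulVec, h2]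
    simp

theorem genInv_cond {W : Matrix (Plot a b) (Plot a b) ℝ} (hW : W.PosSemidef)
    {ξ : BlockArray a b t → ℝ} (hξ : IsMeasure ξ) {G : Matrix (Fin t) (Fin t) ℝ}
    (hG : IsGenInv (Cm11 W ξ) G) : Cm01 W ξ * G * Cm11 W ξ = Cm01 W ξ := by
  apply Matrix.ext_of_mulVec_single
  intro i
  have h := ker_cond hW hξ ((G * Cm11 W ξ) *ᵥ Pi.single i 1 - Pi.single i 1) (by
    rw [Matrix.mulVec_sub, Matrix.mulVec_mulVec, ← Matrix.mul_assoc, hG, sub_self])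
  rw [Matrix.mulVec_sub, Matrix.mulVec_mulVec, ← Matrix.mul_assoc, sub_eq_zero] at h
  exact h

theorem phiB_Cm00 (W : Matrix (Plot a b) (Plot a b) ℝ) (ξ : BlockArray a b t → ℝ) :
    phiB t (Cm00 W ξ) = cm00 W ξ := by
  rw [Cm00, phiB_sum]; simp only [phiB_smul]; rfl

theorem phiB_Cm01 (W : Matrix (Plot a b) (Plot a b) ℝ) (ξ : BlockArray a b t → ℝ) :
    phiB t (Cm01 W ξ) = cm01 W ξ := by
  rw [Cm01, phiB_sum]; simp only [phiB_smul]; rfl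

theorem phiB_Cm11 (W : Matrix (Plot a b) (Plot a b) ℝ) (ξ : BlockArray a b t → ℝ) :
    phiB t (Cm11 W ξ) = cm11 W ξ := by
  rw [Cm11, phiB_sum]; simp only [phiB_smul]; rfl

theorem info_le (ht : 2 ≤ t) {W : Matrix (Plot a b) (Plot a b) ℝ} (hW : W.PosSemidef)
    {ξ : BlockArray a b t → ℝ} (hξ : IsMeasure ξ) {G : Matrix (Fin t) (Fin t) ℝ}
    (hG : IsGenInv (Cm11 W ξ) G) (x : ℝ) :
    phiB t (InfoMat W ξ G) ≤ cm00 W ξ + 2 * cm01 W ξ * x + cm11 W ξ * x ^ 2 := by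
  have hK := genInv_cond hW hξ hG
  have hA := Cm11_psd hW hξ
  have hAs : (Cm11 W ξ)ᵀ = Cm11 W ξ := by
    have := hA.isHermitian.eq
    rwa [Matrix.conjTranspose_eq_transpose_of_trivial] at this
  rw [← phiB_Cm00, ← phiB_Cm01, ← phiB_Cm11]
  have hpsd := hA.mul_mul_conjTranspose_same (Cm01 W ξ * G + x • 1)
  rw [Matrix.conjTranspose_eq_transpose_of_trivial] at hpsd
  have h0 := phiB_nonneg ht hpsd
  have hKt : Cm11 W ξ * (Cm01 W ξ * G)ᵀ = (Cm01 W ξ)ᵀ := by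
    rw [← hAs, ← Matrix.transpose_mul, hK]
  have key : (Cm01 W ξ * G + x • 1) * Cm11 W ξ * (Cm01 W ξ * G + x • 1)ᵀ =
      Cm01 W ξ * G * (Cm01 W ξ)ᵀ + x • (Cm01 W ξ + (Cm01 W ξ)ᵀ) + (x ^ 2) • Cm11 W ξ := by
    rw [Matrix.add_mul, hK, Matrix.transpose_add, Matrix.mul_add, Matrix.add_mul,
      Matrix.smul_mul, Matrix.one_mul, Matrix.smul_mul, hKt]
    nth_rewrite 1 [← hK]
    rw [Matrix.mul_assoc (Cm01 W ξ * G), hKt]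
    simp only [Matrix.transpose_smul, Matrix.transpose_one, Matrix.mul_smul, Matrix.mul_one]
    module
  rw [key] at h0
  simp only [phiB_add, phiB_smul, phiB_transpose] at h0
  rw [InfoMat, phiB_sub]
  linarith

/-! ### Positivity of `c_{s11}` -/

theorem cs11_eq (ht : 2 ≤ t) (W : Matrix (Plot a b) (Plot a b) ℝ) (s : BlockArray a b t) :
    cs11 W s = ∑ k, (fun q => (Fmat s * Bmat (Fin t)) q k) ⬝ᵥ
      W *ᵥ (fun q => (Fmat s * Bmat (Fin t)) q k) := by
  have h1 : cs11 W s = ((Fmat s * Bmat (Fin t))ᵀ * (W * (Fmat s * Bmat (Fin t)))).trace := by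
    change phiB t (Cs11 W s) = _
    rw [phiB_conj ht, Cs11, Matrix.transpose_mul, Bmat_transpose]
    simp only [Matrix.mul_assoc]
  rw [h1]
  rfl

theorem row_sum_Fmat (s : BlockArray a b t) (q : Plot a b) :
    ∑ k, Fmat s q k = ∑ r, Mmat a b q r := by
  simp only [Fmat, Matrix.mul_apply]
  rw [Finset.sum_comm]
  refine Finset.sum_congr rfl fun r _ => ?_
  rw [← Finset.mul_sum]
  simp [Tmat]

theorem Fmat_int (s : BlockArray a b t) (q : Plot a b) (k : Fin t) :
    ∃ z : ℤ, Fmat s q k = z := by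
  refine ⟨∑ r, (if Neighbor q r then 1 else 0) * (if s r = k then 1 else 0), ?_⟩
  simp [Fmat, Matrix.mul_apply, Mmat, Tmat]

theorem degree_corner (ha : 2 ≤ a) (hb : 3 ≤ b) :
    ∑ r, Mmat a b (⟨0, by omega⟩, ⟨0, by omega⟩) r = 2 := by
  simp only [Mmat, Matrix.of_apply]
  rw [Finset.sum_boole]
  have : (Finset.univ.filter fun r : Plot a b =>
      Neighbor ((⟨0, by omega⟩, ⟨0, by omega⟩) : Plot a b) r) =
      {((⟨0, by omega⟩, ⟨1, by omega⟩) : Plot a b), (⟨1, by omega⟩, ⟨0, by omega⟩)} := by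
    ext ⟨⟨i, hi⟩, ⟨j, hj⟩⟩
    rw [Finset.mem_filter]
    simp only [Neighbor, Finset.mem_univ, true_and, Finset.mem_insert,
      Finset.mem_singleton, Prod.mk.injEq, Fin.mk.injEq]
    omega
  rw [this, Finset.card_pair]
  · norm_num
  · simp

theorem degree_side (ha : 2 ≤ a) (hb : 3 ≤ b) :
    ∑ r, Mmat a b (⟨0, by omega⟩, ⟨1, by omega⟩) r = 3 := by
  simp only [Mmat, Matrix.of_apply]
  rw [Finset.sum_boole]
  have : (Finset.univ.filter fun r : Plot a b =>
      Neighbor ((⟨0, by omega⟩, ⟨1, by omega⟩) : Plot a b) r) =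
      {((⟨0, by omega⟩, ⟨0, by omega⟩) : Plot a b), (⟨0, by omega⟩, ⟨2, by omega⟩),
        (⟨1, by omega⟩, ⟨1, by omega⟩)} := by
    ext ⟨⟨i, hi⟩, ⟨j, hj⟩⟩
    rw [Finset.mem_filter]
    simp only [Neighbor, Finset.mem_univ, true_and, Finset.mem_insert,
      Finset.mem_singleton, Prod.mk.injEq, Fin.mk.injEq]
    omega
  rw [this, Finset.card_insert_of_notMem, Finset.card_pair]
  · norm_num
  · simp
  · simp

theorem FB_apply (s : BlockArray a b t) (q : Plot a b) (k : Fin t) :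
    (Fmat s * Bmat (Fin t)) q k = Fmat s q k - (t : ℝ)⁻¹ * ∑ r, Mmat a b q r := by
  rw [← row_sum_Fmat s q, Bmat, Matrix.mul_sub, Matrix.mul_smul, Matrix.mul_one]
  simp [Matrix.mul_apply, Jmat]

theorem cs11_pos (ha : 2 ≤ a) (hb : 3 ≤ b) (ht : 2 ≤ t) {Sig : Matrix (Plot a b) (Plot a b) ℝ}
    (hSig : Sig.PosDef) (s : BlockArray a b t) : 0 < cs11 (Btilde Sig) s := by
  have : Nonempty (Plot a b) := ⟨(⟨0, by omega⟩, ⟨0, by omega⟩)⟩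
  have hnn : ∀ v : Plot a b → ℝ, 0 ≤ v ⬝ᵥ Btilde Sig *ᵥ v := fun v => by
    simpa using (Btilde_psd hSig).dotProduct_mulVec_nonneg v
  rw [cs11_eq ht]
  refine lt_of_le_of_ne (Finset.sum_nonneg fun k _ => hnn _) fun h0 => ?_
  have h1 := (Finset.sum_eq_zero_iff_of_nonneg fun k _ => hnn _).1 h0.symm ⟨0, by omega⟩
    (Finset.mem_univ _)
  have h2 := Btilde_quad_zero hSig _ h1 (⟨0, by omega⟩, ⟨0, by omega⟩) (⟨0, by omega⟩, ⟨1, by omega⟩)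
  simp only [FB_apply] at h2
  rw [degree_corner ha hb, degree_side ha hb] at h2
  obtain ⟨z, hz⟩ := Fmat_int s (⟨0, by omega⟩, ⟨0, by omega⟩) ⟨0, by omega⟩
  obtain ⟨w, hw⟩ := Fmat_int s (⟨0, by omega⟩, ⟨1, by omega⟩) ⟨0, by omega⟩
  rw [hz, hw] at h2
  have ht0 : (t : ℝ) ≠ 0 := by positivity
  have h3 : (t : ℝ) * ((w : ℝ) - z) = 1 := by
    field_simp at h2
    linarith
  have h4 : (t : ℤ) * (w - z) = 1 := by exact_mod_cast h3
  have h5 : (t : ℤ) ∣ 1 := ⟨_, h4.symm⟩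
  have h6 := Int.le_of_dvd one_pos h5
  omega

/-! ### Symmetrization -/

/-- Relabeling of treatments. -/
def relabel (a b : ℕ) {t : ℕ} (σ : Equiv.Perm (Fin t)) :
    BlockArray a b t ≃ BlockArray a b t where
  toFun s := fun q => σ (s q)
  invFun s := fun q => σ.symm (s q)
  left_inv s := by ext q; simp
  right_inv s := by ext q; simp

theorem Tmat_relabel (σ : Equiv.Perm (Fin t)) (s : BlockArray a b t) :
    Tmat (relabel a b σ s) = (Tmat s).submatrix id σ.symm := by
  ext q k
  simp only [Tmat, relabel, Equiv.coe_fn_mk, Matrix.of_apply, Matrix.submatrix_apply, id,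
    Equiv.eq_symm_apply]
  congr

theorem Fmat_relabel (σ : Equiv.Perm (Fin t)) (s : BlockArray a b t) :
    Fmat (relabel a b σ s) = (Fmat s).submatrix id σ.symm := by
  rw [Fmat, Tmat_relabel]; rfl

theorem Cs00_relabel (W : Matrix (Plot a b) (Plot a b) ℝ) (σ : Equiv.Perm (Fin t))
    (s : BlockArray a b t) :
    Cs00 W (relabel a b σ s) = (Cs00 W s).submatrix σ.symm σ.symm := by
  rw [Cs00, Tmat_relabel]; rfl

theorem Cs01_relabel (W : Matrix (Plot a b) (Plot a b) ℝ) (σ : Equiv.Perm (Fin t))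
    (s : BlockArray a b t) :
    Cs01 W (relabel a b σ s) = (Cs01 W s).submatrix σ.symm σ.symm := by
  rw [Cs01, Tmat_relabel, Fmat_relabel]; rfl

theorem Cs11_relabel (W : Matrix (Plot a b) (Plot a b) ℝ) (σ : Equiv.Perm (Fin t))
    (s : BlockArray a b t) :
    Cs11 W (relabel a b σ s) = (Cs11 W s).submatrix σ.symm σ.symm := by
  rw [Cs11, Fmat_relabel]; rfl

/-- The symmetrized measure. -/
noncomputable def symz (η : BlockArray a b t → ℝ) (s : BlockArray a b t) : ℝ :=
  (Fintype.card (Equiv.Perm (Fin t)) : ℝ)⁻¹ * ∑ τ : Equiv.Perm (Fin t), η (relabel a b τ s)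

theorem symz_relabel (η : BlockArray a b t → ℝ) (σ : Equiv.Perm (Fin t)) (s : BlockArray a b t) :
    symz η (relabel a b σ s) = symz η s := by
  unfold symz
  congr 1
  exact Equiv.sum_comp (Equiv.mulRight σ) (fun τ => η (relabel a b τ s))

theorem symz_sum (η : BlockArray a b t → ℝ) (c : BlockArray a b t → ℝ)
    (hc : ∀ σ s, c (relabel a b σ s) = c s) : ∑ s, symz η s * c s = ∑ s, η s * c s := by
  have h : ∀ τ : Equiv.Perm (Fin t), ∑ s, η (relabel a b τ s) * c s = ∑ s, η s * c s := by
    intro τ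
    rw [← Equiv.sum_comp (relabel a b τ) (fun s => η s * c s)]
    simp only [hc]
  simp only [symz, mul_assoc, Finset.sum_mul]
  rw [← Finset.mul_sum, Finset.sum_comm]
  simp only [h]
  rw [Finset.sum_const, Finset.card_univ, nsmul_eq_mul, ← mul_assoc, inv_mul_cancel₀, one_mul]
  exact_mod_cast Fintype.card_ne_zero

theorem symz_measure {η : BlockArray a b t → ℝ} (hη : IsMeasure η) : IsMeasure (symz η) := by
  constructor
  · intro s
    exact mul_nonneg (by positivity) (Finset.sum_nonneg fun _ _ => hη.1 _)
  · have := symz_sum η (fun _ => 1) (fun _ _ => rfl)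
    simpa [hη.2] using this

theorem symz_inv (η : BlockArray a b t → ℝ) (f : BlockArray a b t → Matrix (Fin t) (Fin t) ℝ)
    (hf : ∀ σ s, f (relabel a b σ s) = (f s).submatrix (Equiv.symm σ) (Equiv.symm σ))
    (σ : Equiv.Perm (Fin t)) (i j : Fin t) :
    (∑ s, symz η s • f s) (σ i) (σ j) = (∑ s, symz η s • f s) i j := by
  rw [← Equiv.sum_comp (relabel a b σ)]
  simp only [symz_relabel, hf, Matrix.sum_apply, Matrix.smul_apply, Matrix.submatrix_apply,
    Equiv.symm_apply_apply]
  rw [← Equiv.sum_comp (relabel a b σ) (fun s => symz η s • f s i j)]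
  simp only [symz_relabel, hf, Matrix.submatrix_apply]

theorem complSym_of_inv (ht : 2 ≤ t) (C : Matrix (Fin t) (Fin t) ℝ)
    (h : ∀ (σ : Equiv.Perm (Fin t)) i j, C (σ i) (σ j) = C i j) : ComplSym C := by
  let i0 : Fin t := ⟨0, by omega⟩
  let i1 : Fin t := ⟨1, by omega⟩
  have h01 : i0 ≠ i1 := by simp [i0, i1]
  have hd : ∀ i, C i i = C i0 i0 := fun i => by
    have := h (Equiv.swap i i0) i i
    rw [Equiv.swap_apply_left] at this
    exact this.symm
  have ho : ∀ i j, i ≠ j → C i j = C i0 i1 := fun i j hij => by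
    have h1 := h (Equiv.swap i i0) i j
    rw [Equiv.swap_apply_left] at h1
    have hne : i0 ≠ Equiv.swap i i0 j := by
      intro he
      apply hij
      apply (Equiv.swap i i0).injective
      rw [Equiv.swap_apply_left]; exact he
    have h2 := h (Equiv.swap (Equiv.swap i i0 j) i1) i0 (Equiv.swap i i0 j)
    rw [Equiv.swap_apply_left, Equiv.swap_apply_of_ne_of_ne hne h01] at h2
    rw [← h1, h2]
  refine ⟨C i0 i0 - C i0 i1, C i0 i1, ?_⟩
  ext i j
  by_cases hij : i = j
  · subst hij
    simp [Jmat, hd i]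
  · simp [Jmat, hij, ho i j hij]

theorem Cm01_colsum {W : Matrix (Plot a b) (Plot a b) ℝ} (hW : W.IsSymm) (hW1 : W *ᵥ 1 = 0)
    (ξ : BlockArray a b t → ℝ) : Jmat (Fin t) * Cm01 W ξ = 0 := by
  have hT : ∀ s : BlockArray a b t, Jmat (Fin t) * (Tmat s)ᵀ * W = 0 := by
    intro s
    ext k q
    have := congrFun hW1 q
    rw [← hW.eq] at this
    simp only [Matrix.mulVec, dotProduct, Matrix.transpose_apply, Pi.one_apply, mul_one,
      Pi.zero_apply] at this
    simp [Matrix.mul_apply, Jmat, Tmat, this]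
  rw [Cm01, Matrix.mul_sum]
  refine Finset.sum_eq_zero fun s _ => ?_
  rw [Matrix.mul_smul, Cs01, ← Matrix.mul_assoc, ← Matrix.mul_assoc, hT]
  simp

theorem info_symz (ht : 2 ≤ t) {W : Matrix (Plot a b) (Plot a b) ℝ} (hW : W.IsSymm)
    (hW1 : W *ᵥ 1 = 0) (η : BlockArray a b t → ℝ) (hc : 0 < cm11 W η)
    {H : Matrix (Fin t) (Fin t) ℝ} (hH : IsGenInv (Cm11 W (symz η)) H) :
    phiB t (InfoMat W (symz η) H) = cm00 W η - (cm01 W η) ^ 2 / cm11 W η := by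
  have e00 : cm00 W (symz η) = cm00 W η := symz_sum η _ fun σ s => by
    change phiB t _ = phiB t _
    rw [Cs00_relabel, phiB_submatrix]
  have e01 : cm01 W (symz η) = cm01 W η := symz_sum η _ fun σ s => by
    change phiB t _ = phiB t _
    rw [Cs01_relabel, phiB_submatrix]
  have e11 : cm11 W (symz η) = cm11 W η := symz_sum η _ fun σ s => by
    change phiB t _ = phiB t _
    rw [Cs11_relabel, phiB_submatrix]
  obtain ⟨κ, l, hK⟩ : ComplSym (Cm01 W (symz η)) :=
    complSym_of_inv ht _ (symz_inv η _ (Cs01_relabel W))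
  obtain ⟨α, β, hA⟩ : ComplSym (Cm11 W (symz η)) :=
    complSym_of_inv ht _ (symz_inv η _ (Cs11_relabel W))
  have htp : (0 : ℝ) < t := by positivity
  have ht1 : (0 : ℝ) < (t : ℝ) - 1 := by
    have : (2 : ℝ) ≤ t := by exact_mod_cast ht
    linarith
  have pone : phiB t 1 = (t : ℝ) - 1 := by rw [phiB, Matrix.mul_one, Bmat_trace ht]
  have pB : phiB t (Bmat (Fin t)) = (t : ℝ) - 1 := by rw [phiB, Bmat_mul_Bmat ht, Bmat_trace ht]
  have pJ : phiB t (Jmat (Fin t)) = 0 := by rw [phiB, Bmat_mul_Jmat ht]; simp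
  have hl : κ + t * l = 0 := by
    have h0 := Cm01_colsum hW hW1 (symz η)
    rw [hK, Matrix.mul_add, Matrix.mul_smul, Matrix.mul_smul, Jmat_mul_Jmat] at h0
    have := congrFun (congrFun h0 ⟨0, by omega⟩) ⟨0, by omega⟩
    simp [Jmat] at this
    linarith
  have hKB : Cm01 W (symz η) = κ • Bmat (Fin t) := by
    rw [hK, Bmat, Fintype.card_fin, smul_sub, smul_smul]
    have : l = -(κ * (t : ℝ)⁻¹) := by field_simp; linarith
    rw [this]; module
  have c01 : cm01 W η = κ * (t - 1) := by rw [← e01, ← phiB_Cm01, hKB, phiB_smul, pB]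
  have c11 : cm11 W η = α * (t - 1) := by
    rw [← e11, ← phiB_Cm11, hA, phiB_add, phiB_smul, phiB_smul, pJ, pone]; ring
  have hα : 0 < α := by
    rw [c11] at hc
    exact (pos_iff_pos_of_mul_pos hc).2 ht1
  have hZ : Cm01 W (symz η) = ((κ / α) • Bmat (Fin t)) * Cm11 W (symz η) := by
    rw [hKB, hA, Matrix.mul_add, Matrix.mul_smul, Matrix.mul_one, Matrix.mul_smul,
      Matrix.smul_mul, Bmat_mul_Jmat ht, smul_smul, mul_div_cancel₀ _ hα.ne']
    simp
  have hAs : (Cm11 W (symz η))ᵀ = Cm11 W (symz η) := by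
    rw [Cm11, Matrix.transpose_sum]
    exact Finset.sum_congr rfl fun s _ => by
      rw [Matrix.transpose_smul, (Cs_symm00 hW s).eq]
  have hZt : (Cm01 W (symz η))ᵀ = Cm11 W (symz η) * ((κ / α) • Bmat (Fin t)) := by
    rw [hZ, Matrix.transpose_mul, hAs, Matrix.transpose_smul, Bmat_transpose]
  have hmain : Cm01 W (symz η) * H * (Cm01 W (symz η))ᵀ = (κ ^ 2 / α) • Bmat (Fin t) := by
    calc _ = ((κ / α) • Bmat (Fin t)) * (Cm11 W (symz η) * H * Cm11 W (symz η)) *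
          ((κ / α) • Bmat (Fin t)) := by
          rw [hZt]; nth_rewrite 1 [hZ]; simp only [Matrix.mul_assoc]
      _ = (κ ^ 2 / α) • Bmat (Fin t) := by
          rw [hH, ← hZ, hKB, Matrix.smul_mul, Matrix.mul_smul, Bmat_mul_Bmat ht, smul_smul]
          congr 1; ring
  rw [InfoMat, phiB_sub, hmain, phiB_smul, pB, phiB_Cm00, e00, c01, c11]
  field_simp

/-! ### Minimax -/

theorem active_right {ι : Type*} [Finite ι] (A B C : ι → ℝ) (x y : ℝ)
    (hle : ∀ s, A s + 2 * B s * x + C s * x ^ 2 ≤ y)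
    (hex : ∀ z, ∃ s, y ≤ A s + 2 * B s * z + C s * z ^ 2) :
    ∃ s, A s + 2 * B s * x + C s * x ^ 2 = y ∧ 0 ≤ B s + C s * x := by
  by_contra! hcon
  have hev : ∀ s, ∀ᶠ h in nhdsWithin (0 : ℝ) (Set.Ioi 0),
      A s + 2 * B s * (x + h) + C s * (x + h) ^ 2 < y := by
    intro s
    rcases (hle s).lt_or_eq with hlt | heq
    · have hcont : Continuous fun h : ℝ => A s + 2 * B s * (x + h) + C s * (x + h) ^ 2 := by
        fun_prop
      have := (hcont.tendsto 0).eventually_lt_const (u := y) (by simpa using hlt)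
      exact this.filter_mono nhdsWithin_le_nhds
    · have hneg := hcon s heq
      have hcont : Continuous fun h : ℝ => 2 * (B s + C s * x) + C s * h := by fun_prop
      have := (hcont.tendsto 0).eventually_lt_const (u := 0) (by simp only [mul_zero, add_zero]; linarith)
      filter_upwards [this.filter_mono nhdsWithin_le_nhds, self_mem_nhdsWithin] with h h1 h2
      have h3 : h * (2 * (B s + C s * x) + C s * h) < 0 := mul_neg_of_pos_of_neg h2 h1
      nlinarith
  obtain ⟨h, hh⟩ := (Filter.eventually_all.2 hev).exists
  obtain ⟨s, hs⟩ := hex (x + h)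
  exact absurd (hh s) (not_lt.2 hs)

theorem active_left {ι : Type*} [Finite ι] (A B C : ι → ℝ) (x y : ℝ)
    (hle : ∀ s, A s + 2 * B s * x + C s * x ^ 2 ≤ y)
    (hex : ∀ z, ∃ s, y ≤ A s + 2 * B s * z + C s * z ^ 2) :
    ∃ s, A s + 2 * B s * x + C s * x ^ 2 = y ∧ B s + C s * x ≤ 0 := by
  obtain ⟨s, h1, h2⟩ := active_right A (fun s => -B s) C (-x) y
    (fun s => by have := hle s; nlinarith)
    (fun z => by obtain ⟨s, hs⟩ := hex (-z); exact ⟨s, by nlinarith⟩)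
  exact ⟨s, by nlinarith, by nlinarith⟩

theorem exists_weights {ι : Type*} [Fintype ι] [DecidableEq ι] (A B C : ι → ℝ) (x y : ℝ)
    (hle : ∀ s, A s + 2 * B s * x + C s * x ^ 2 ≤ y)
    (hex : ∀ z, ∃ s, y ≤ A s + 2 * B s * z + C s * z ^ 2) :
    ∃ w : ι → ℝ, (∀ s, 0 ≤ w s) ∧ ∑ s, w s = 1 ∧
      ∑ s, w s * A s + 2 * (∑ s, w s * B s) * x + (∑ s, w s * C s) * x ^ 2 = y ∧
      ∑ s, w s * B s + (∑ s, w s * C s) * x = 0 := by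
  obtain ⟨s, hs, hs0⟩ := active_right A B C x y hle hex
  obtain ⟨r, hr, hr0⟩ := active_left A B C x y hle hex
  obtain ⟨p, hp0, hp1, hp⟩ : ∃ p : ℝ, 0 ≤ p ∧ p ≤ 1 ∧
      p * (B s + C s * x) + (1 - p) * (B r + C r * x) = 0 := by
    set u := B s + C s * x
    set v := B r + C r * x
    by_cases h : u - v = 0
    · exact ⟨0, le_rfl, zero_le_one, by linarith⟩
    · have hpos : 0 < u - v := lt_of_le_of_ne (by linarith) (Ne.symm h)
      refine ⟨-v / (u - v), div_nonneg (by linarith) hpos.le, ?_, ?_⟩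
      · rw [div_le_one hpos]; linarith
      · field_simp; ring
  have hsum : ∀ f : ι → ℝ, ∑ k, (p * Pi.single (M := fun _ => ℝ) s 1 k +
      (1 - p) * Pi.single (M := fun _ => ℝ) r 1 k) * f k = p * f s + (1 - p) * f r := by
    intro f
    simp [Pi.single_apply, add_mul, Finset.sum_add_distrib]
  refine ⟨fun k => p * Pi.single (M := fun _ => ℝ) s 1 k +
      (1 - p) * Pi.single (M := fun _ => ℝ) r 1 k, ?_, ?_, ?_, ?_⟩
  · intro k
    simp only [Pi.single_apply]
    have : 0 ≤ 1 - p := by linarith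
    positivity
  · have := hsum (fun _ => 1)
    simp only [mul_one] at this
    rw [this]; ring
  · rw [hsum, hsum, hsum]
    linear_combination p * hs + (1 - p) * hr
  · rw [hsum, hsum]
    linear_combination hp

theorem cm11_pos (ha : 2 ≤ a) (hb : 3 ≤ b) (ht : 2 ≤ t) {Sig : Matrix (Plot a b) (Plot a b) ℝ}
    (hSig : Sig.PosDef) {ξ : BlockArray a b t → ℝ} (hξ : IsMeasure ξ) :
    0 < cm11 (Btilde Sig) ξ := by
  have hnn : ∀ s ∈ Finset.univ, 0 ≤ ξ s * cs11 (Btilde Sig) s := fun s _ =>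
    mul_nonneg (hξ.1 s) (cs11_pos ha hb ht hSig s).le
  obtain ⟨s, -, hs⟩ : ∃ s ∈ Finset.univ, 0 < ξ s := by
    by_contra! hcon
    have := Finset.sum_nonpos hcon
    rw [hξ.2] at this
    linarith
  exact Finset.sum_pos' hnn ⟨s, Finset.mem_univ _, mul_pos hs (cs11_pos ha hb ht hSig s)⟩

/-- Lemma `sym:point`: if a measure `ξ` is universally optimal then
`q*_ξ = y*`, `x* = −c_{ξ01}/c_{ξ11}`, and the support of `ξ` is contained in `Q`. -/
theorem univOptimal_support_subset_Q
    (a b t : ℕ) (ha : 2 ≤ a) (hab : a ≤ b) (hb : 3 ≤ b) (ht : 2 ≤ t)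
    (Sig : Matrix (Plot a b) (Plot a b) ℝ) (hSig : Sig.PosDef)
    (xstar ystar : ℝ)
    (hx : ∀ y : ℝ, rfun t (Btilde Sig) xstar ≤ rfun t (Btilde Sig) y)
    (hy : ystar = rfun t (Btilde Sig) xstar)
    (ξ : BlockArray a b t → ℝ) (hξ : IsMeasure ξ)
    (hopt : UnivOptimal (Btilde Sig) ξ) :
    qstar (Btilde Sig) ξ = ystar ∧
    xstar = -(cm01 (Btilde Sig) ξ) / cm11 (Btilde Sig) ξ ∧
    ∀ s : BlockArray a b t, 0 < ξ s → qpoly (Btilde Sig) s xstar = ystar := by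
  classical
  have : Nonempty (Plot a b) := ⟨(⟨0, by omega⟩, ⟨0, by omega⟩)⟩
  have : Nonempty (Fin t) := ⟨⟨0, by omega⟩⟩
  set W := Btilde Sig with hWdef
  have hWp : W.PosSemidef := Btilde_psd hSig
  have hWs : W.IsSymm := Btilde_symm hSig
  have hW1 : W *ᵥ 1 = 0 := Btilde_one hSig
  have hle : ∀ s : BlockArray a b t, qpoly W s xstar ≤ ystar := fun s => by
    rw [hy]
    exact le_csSup (Set.finite_range _).bddAbove ⟨s, rfl⟩
  have hex : ∀ z, ∃ s : BlockArray a b t, ystar ≤ qpoly W s z := fun z => by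
    obtain ⟨s, hs⟩ := (Set.range_nonempty fun s : BlockArray a b t => qpoly W s z).csSup_mem
      (Set.finite_range _)
    exact ⟨s, by rw [hy]; exact (hx z).trans_eq hs.symm⟩
  obtain ⟨η, hη0, hη1, hηy, hηd⟩ := exists_weights (cs00 W) (cs01 W) (cs11 W) xstar ystar hle hex
  have hη : IsMeasure η := ⟨hη0, hη1⟩
  change cm00 W η + 2 * cm01 W η * xstar + cm11 W η * xstar ^ 2 = ystar at hηy
  change cm01 W η + cm11 W η * xstar = 0 at hηd
  have hcη : 0 < cm11 W η := cm11_pos ha hb ht hSig hη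
  have hcξ : 0 < cm11 W ξ := cm11_pos ha hb ht hSig hξ
  obtain ⟨G, hG⟩ := exists_genInv (Cm11 W ξ)
  obtain ⟨H, hH⟩ := exists_genInv (Cm11 W (symz η))
  have hle2 := hopt (symz η) (symz_measure hη) G H hG hH (phiB t) (phiB_good ht)
  rw [info_symz ht hWs hW1 η hcη hH] at hle2
  have hqη : cm00 W η - (cm01 W η) ^ 2 / cm11 W η = ystar := by
    have : cm01 W η = -(cm11 W η * xstar) := by linarith
    rw [← hηy, this]
    field_simp
    ring
  rw [hqη] at hle2
  have hall : ∀ x, ystar ≤ cm00 W ξ + 2 * cm01 W ξ * x + cm11 W ξ * x ^ 2 := fun x =>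
    hle2.trans (info_le ht hWp hξ hG x)
  have hsum : cm00 W ξ + 2 * cm01 W ξ * xstar + cm11 W ξ * xstar ^ 2 =
      ∑ s, ξ s * qpoly W s xstar := by
    simp only [cm00, cm01, cm11, qpoly, mul_add, Finset.sum_add_distrib, Finset.sum_mul,
      Finset.mul_sum]
    congr 1
    · congr 1
      exact Finset.sum_congr rfl fun s _ => by ring
    · exact Finset.sum_congr rfl fun s _ => by ring
  have hdef : ∑ s, ξ s * (ystar - qpoly W s xstar) =
      ystar - (cm00 W ξ + 2 * cm01 W ξ * xstar + cm11 W ξ * xstar ^ 2) := by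
    rw [hsum]
    simp only [mul_sub, Finset.sum_sub_distrib]
    rw [← Finset.sum_mul, hξ.2, one_mul]
  have hnn : ∀ s ∈ Finset.univ, 0 ≤ ξ s * (ystar - qpoly W s xstar) := fun s _ =>
    mul_nonneg (hξ.1 s) (sub_nonneg.2 (hle s))
  have hzero : ∑ s, ξ s * (ystar - qpoly W s xstar) = 0 :=
    le_antisymm (by rw [hdef]; linarith [hall xstar]) (Finset.sum_nonneg hnn)
  have heq : cm00 W ξ + 2 * cm01 W ξ * xstar + cm11 W ξ * xstar ^ 2 = ystar := by
    rw [hdef] at hzero; linarith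
  have hxs : xstar = -(cm01 W ξ) / cm11 W ξ := by
    have h1 := hall (-(cm01 W ξ) / cm11 W ξ)
    have h2 : cm00 W ξ + 2 * cm01 W ξ * (-(cm01 W ξ) / cm11 W ξ) +
        cm11 W ξ * (-(cm01 W ξ) / cm11 W ξ) ^ 2 =
        ystar - cm11 W ξ * (xstar - -(cm01 W ξ) / cm11 W ξ) ^ 2 := by
      rw [← heq]
      field_simp
      ring
    rw [h2] at h1
    have h3 : cm11 W ξ * (xstar - -(cm01 W ξ) / cm11 W ξ) ^ 2 ≤ 0 := by linarith
    have h4 : (xstar - -(cm01 W ξ) / cm11 W ξ) ^ 2 = 0 :=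
      le_antisymm (nonpos_of_mul_nonpos_right h3 hcξ) (sq_nonneg _)
    exact sub_eq_zero.1 (pow_eq_zero_iff (two_ne_zero) |>.1 h4)
  refine ⟨?_, hxs, fun s hs => ?_⟩
  · rw [← heq, hxs, qstar]
    field_simp
    ring
  · have h1 := (Finset.sum_eq_zero_iff_of_nonneg hnn).1 hzero s (Finset.mem_univ _)
    rcases mul_eq_zero.1 h1 with h | h
    · exact absurd h hs.ne'
    · linarith

end TwoDim
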